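/- arXiv:2301.08390 — 4 statements merged into one kernel-verified Lean document; each statement's English description precedes it below -/
import Mathlib

section
/- Let E be a real inner product space, ι a finite index set, w : ι → ℝ with w_i ≥ 0 for all i and Σ_{i∈ι} w_i > 0, and x : ι → E, and suppose s = Σ_{i∈ι} w_i·x_i ≠ 0. Then s/‖s‖ is the unique global minimizer of F(μ) = Σ_{i∈ι} w_i·‖μ − x_i‖² over the unit sphere {μ ∈ E : ‖μ‖ = 1}; that is, ‖s/‖s‖‖ = 1 and F(μ) > F(s/‖s‖) for every μ with ‖μ‖ = 1 and μ ≠ s/‖s‖. (This is the paper's appendix claim that renormalizing the centroid after each μ-update exactly solves the OSLO μ-step under the constraint ‖μ_k‖ = 1.) -/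
open scoped BigOperators

/-!
On a sphere centred at the origin the quadratic term of `∑ i, w i * ‖μ - x i‖ ^ 2` is constant, so
minimizing this sum amounts to maximizing the linear functional `μ ↦ ⟪μ, s⟫`, where
`s = ∑ i, w i • x i`. By the equality case of Cauchy–Schwarz, the only maximizer of `⟪·, s⟫` on the
unit sphere is `‖s‖⁻¹ • s`.
-/

section WeightedSumOfSquares

variable {E : Type*} [NormedAddCommGroup E] [InnerProductSpace ℝ E]

theorem real_inner_inv_norm_smul_self (v : E) : inner ℝ (‖v‖⁻¹ • v) v = ‖v‖ := by
  rw [real_inner_smul_left, real_inner_self_eq_norm_mul_norm, ← mul_assoc, inv_mul_mul_self]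

theorem real_inner_lt_norm_iff_ne_inv_norm_smul {u v : E} (hu : ‖u‖ = 1) (hv : v ≠ 0) :
    inner ℝ u v < ‖v‖ ↔ u ≠ ‖v‖⁻¹ • v := by
  rw [ne_eq, eq_inv_smul_iff₀ (norm_ne_zero_iff.mpr hv)]
  simpa only [hu, one_mul, one_smul] using inner_lt_norm_mul_iff_real (x := u) (y := v)

variable {ι : Type*} (t : Finset ι) (w : ι → ℝ) (x : ι → E)

theorem sum_mul_norm_sub_sq (μ : E) :
    ∑ i ∈ t, w i * ‖μ - x i‖ ^ 2 =
      (∑ i ∈ t, w i) * ‖μ‖ ^ 2 - 2 * inner ℝ μ (∑ i ∈ t, w i • x i) +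
        ∑ i ∈ t, w i * ‖x i‖ ^ 2 := by
  simp only [inner_sum, real_inner_smul_right, Finset.sum_mul, Finset.mul_sum,
    ← Finset.sum_sub_distrib, ← Finset.sum_add_distrib]
  refine Finset.sum_congr rfl fun i _ => ?_
  rw [norm_sub_sq_real]
  ring

theorem sum_mul_norm_sub_sq_lt_iff_of_norm_eq {μ ν : E} (h : ‖μ‖ = ‖ν‖) :
    ∑ i ∈ t, w i * ‖μ - x i‖ ^ 2 < ∑ i ∈ t, w i * ‖ν - x i‖ ^ 2 ↔
      inner ℝ ν (∑ i ∈ t, w i • x i) < inner ℝ μ (∑ i ∈ t, w i • x i) := by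
  rw [sum_mul_norm_sub_sq, sum_mul_norm_sub_sq, h, add_lt_add_iff_right, sub_lt_sub_iff_left,
    mul_lt_mul_iff_right₀ two_pos]

theorem weighted_barycenter_unit_sphere_minimizer_general
    (s : E) (hs_def : s = ∑ i ∈ t, w i • x i) (hs : s ≠ 0) :
    ‖(‖s‖⁻¹ • s : E)‖ = 1 ∧
      ∀ μ : E, ‖μ‖ = 1 → μ ≠ ‖s‖⁻¹ • s →
        ∑ i ∈ t, w i * ‖(‖s‖⁻¹ • s : E) - x i‖ ^ 2 < ∑ i ∈ t, w i * ‖μ - x i‖ ^ 2 := by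
  have norm_unit : ‖(‖s‖⁻¹ • s : E)‖ = 1 := norm_smul_inv_norm (𝕜 := ℝ) hs
  refine ⟨norm_unit, fun μ hμ hne => ?_⟩
  rw [sum_mul_norm_sub_sq_lt_iff_of_norm_eq t w x (norm_unit.trans hμ.symm), ← hs_def,
    real_inner_inv_norm_smul_self]
  exact (real_inner_lt_norm_iff_ne_inv_norm_smul hμ hs).mpr hne

end WeightedSumOfSquares

/-- With nonnegative weights `w` of positive total mass and `s = Σ_i w_i • x_i ≠ 0`,
the normalized vector `s/‖s‖` is the unique global minimizer of
`F(μ) = Σ_i w_i·‖μ − x_i‖²` over the unit sphere `{μ : ‖μ‖ = 1}`. -/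
theorem weighted_barycenter_unit_sphere_minimizer
    {E : Type*} [NormedAddCommGroup E] [InnerProductSpace ℝ E]
    {ι : Type*} [Fintype ι] (w : ι → ℝ) (hw : ∀ i, 0 ≤ w i)
    (hW : 0 < ∑ i, w i) (x : ι → E)
    (s : E) (hs_def : s = ∑ i, w i • x i) (hs : s ≠ 0) :
    ‖(‖s‖⁻¹ • s : E)‖ = 1 ∧
      ∀ μ : E, ‖μ‖ = 1 → μ ≠ ‖s‖⁻¹ • s →
        ∑ i, w i * ‖(‖s‖⁻¹ • s : E) - x i‖ ^ 2 < ∑ i, w i * ‖μ - x i‖ ^ 2 :=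
  weighted_barycenter_unit_sphere_minimizer_general Finset.univ w x s hs_def hs
end

section
/- In the OSLO setup, fix z with z_i ∈ Δ^K for all i ∈ S ∪ Q and z_i = y_i for i ∈ S, and fix μ ∈ E^K. Consider L(ξ, z, μ) as a function of ξ over the set of ξ with ξ_i = 1 for i ∈ S and ξ_i ∈ (0,1) for i ∈ Q. Then this function attains its unique global maximum at ξ* given, for each i ∈ Q, by ξ*_i = σ((1/λ_ξ)·Σ_{k=1}^K z_{ik}·log p(v_i, k; μ)); that is, L(ξ, z, μ) < L(ξ*, z, μ) for every such feasible ξ ≠ ξ*. (ξ-block of Proposition 1 for the full OSLO objective.) -/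
open scoped BigOperators

/-- Binary entropy `H_b(ξ) = −ξ·log ξ − (1−ξ)·log(1−ξ)`. -/
noncomputable def Hb (ξ : ℝ) : ℝ := -ξ * Real.log ξ - (1 - ξ) * Real.log (1 - ξ)

/-- Sigmoid `σ(x) = 1/(1+exp(−x))`. -/
noncomputable def sigmoid (x : ℝ) : ℝ := 1 / (1 + Real.exp (-x))

/-- Shannon entropy `H(z) = −Σ_k z_k·log z_k` (with the convention `0·log 0 = 0`,
which holds since `Real.log 0 = 0`). -/
noncomputable def shannonH {K : ℕ} (z : Fin K → ℝ) : ℝ := -∑ k, z k * Real.log (z k)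

/-- Gaussian parametric model: `log p(v, k; μ) = −(1/2)·‖v − μ_k‖² + c`. -/
noncomputable def logp {E : Type*} [NormedAddCommGroup E] [InnerProductSpace ℝ E]
    {K : ℕ} (c : ℝ) (v : E) (k : Fin K) (μ : Fin K → E) : ℝ :=
  -(1 / 2) * ‖v - μ k‖ ^ 2 + c

/-- The OSLO objective
`L(ξ, z, μ) = Σ_{i∈S∪Q} ξ_i·Σ_k z_{ik}·log p(v_i, k; μ) + Σ_{i∈Q} (λ_z·H(z_i) + λ_ξ·H_b(ξ_i))`. -/
noncomputable def osloL {E : Type*} [NormedAddCommGroup E] [InnerProductSpace ℝ E]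
    {ι : Type*} [DecidableEq ι] {K : ℕ} (S Q : Finset ι) (v : ι → E)
    (lamxi lamz c : ℝ) (ξ : ι → ℝ) (z : ι → Fin K → ℝ) (μ : Fin K → E) : ℝ :=
  (∑ i ∈ S ∪ Q, ξ i * ∑ k, z i k * logp c (v i) k μ) +
    ∑ i ∈ Q, (lamz * shannonH (z i) + lamxi * Hb (ξ i))

/-!
Each query index contributes the linear-plus-entropy function `x ↦ x·a + H_b(x)` (up to the factor
`λ_ξ`). The Gibbs variational identity `x·a + H_b(x) = log(1 + eᵃ) - KL(x ‖ σ(a))` computes its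
deficit from the maximum exactly, so the gap in the objective between `ξ*` and any competitor `ξ`
is `λ_ξ` times a sum of Bernoulli divergences `KL(ξ_i ‖ ξ*_i)`, which is positive unless `ξ = ξ*`.
-/

section BernoulliDivergence

open InformationTheory

/-- The Kullback-Leibler divergence `KL(p ‖ q)` of the Bernoulli distribution of parameter `p` from
that of parameter `q`, written as the `f`-divergence with generator `klFun x = x * log x + 1 - x`,
so that both summands are nonnegative for `p, q ∈ [0, 1]`. It is only meaningful for `q ∈ (0, 1)`:
at `q = 0` and `q = 1` division by zero makes it finite where the divergence should be infinite. -/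
noncomputable def bernoulliKL (p q : ℝ) : ℝ :=
  q * klFun (p / q) + (1 - q) * klFun ((1 - p) / (1 - q))

theorem mul_klFun_div {p q : ℝ} (hq : q ≠ 0) :
    q * klFun (p / q) = p * (Real.log p - Real.log q) + q - p := by
  rcases eq_or_ne p 0 with rfl | hp
  · simp [klFun_zero]
  · rw [klFun_apply, Real.log_div hp hq]
    field_simp

theorem bernoulliKL_eq {p q : ℝ} (hq₀ : q ≠ 0) (hq₁ : q ≠ 1) :
    bernoulliKL p q = -Hb p - p * Real.log q - (1 - p) * Real.log (1 - q) := by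
  rw [bernoulliKL, mul_klFun_div hq₀, mul_klFun_div (sub_ne_zero.mpr hq₁.symm), Hb]
  ring

theorem bernoulliKL_self (q : ℝ) : bernoulliKL q q = 0 := by
  have mul_klFun_div_self : ∀ r : ℝ, r * klFun (r / r) = 0 := fun r => by
    rcases eq_or_ne r 0 with rfl | hr
    · exact zero_mul _
    · rw [div_self hr, klFun_one, mul_zero]
  rw [bernoulliKL, mul_klFun_div_self, mul_klFun_div_self, add_zero]

theorem bernoulliKL_nonneg {p q : ℝ} (hp : p ∈ Set.Icc 0 1) (hq : q ∈ Set.Icc 0 1) :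
    0 ≤ bernoulliKL p q :=
  add_nonneg (mul_nonneg hq.1 (klFun_nonneg (div_nonneg hp.1 hq.1)))
    (mul_nonneg (sub_nonneg.mpr hq.2)
      (klFun_nonneg (div_nonneg (sub_nonneg.mpr hp.2) (sub_nonneg.mpr hq.2))))

theorem bernoulliKL_pos {p q : ℝ} (hp : p ∈ Set.Icc 0 1) (hq : q ∈ Set.Ioo 0 1) (hpq : p ≠ q) :
    0 < bernoulliKL p q := by
  have hdiv : 0 ≤ p / q := div_nonneg hp.1 hq.1.le
  have hkl : klFun (p / q) ≠ 0 := by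
    rwa [Ne, klFun_eq_zero_iff hdiv, div_eq_one_iff_eq hq.1.ne']
  exact add_pos_of_pos_of_nonneg
    (mul_pos hq.1 ((klFun_nonneg hdiv).lt_of_ne' hkl))
    (mul_nonneg (sub_nonneg.mpr hq.2.le)
      (klFun_nonneg (div_nonneg (sub_nonneg.mpr hp.2) (sub_nonneg.mpr hq.2.le))))

end BernoulliDivergence

theorem sigmoid_eq_real_sigmoid (a : ℝ) : sigmoid a = Real.sigmoid a := by
  rw [sigmoid, Real.sigmoid_def, one_div]

theorem sigmoid_mem_Ioo (a : ℝ) : sigmoid a ∈ Set.Ioo 0 1 := by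
  rw [sigmoid_eq_real_sigmoid]
  exact ⟨Real.sigmoid_pos a, Real.sigmoid_lt_one a⟩

theorem log_one_sub_sigmoid (a : ℝ) :
    Real.log (1 - sigmoid a) = -Real.log (1 + Real.exp a) := by
  rw [sigmoid_eq_real_sigmoid, ← Real.sigmoid_neg, Real.sigmoid_def, neg_neg, Real.log_inv]

theorem log_sigmoid (a : ℝ) : Real.log (sigmoid a) = a - Real.log (1 + Real.exp a) := by
  have odds : sigmoid a * Real.exp (-a) = 1 - sigmoid a := by
    rw [sigmoid_eq_real_sigmoid, Real.sigmoid_mul_rexp_neg, Real.sigmoid_neg]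
  have log_odds := congrArg Real.log odds
  rw [Real.log_mul (sigmoid_mem_Ioo a).1.ne' (Real.exp_ne_zero _), Real.log_exp,
    log_one_sub_sigmoid] at log_odds
  linarith

theorem mul_add_Hb_eq_log_sub_bernoulliKL (a x : ℝ) :
    x * a + Hb x = Real.log (1 + Real.exp a) - bernoulliKL x (sigmoid a) := by
  rw [bernoulliKL_eq (sigmoid_mem_Ioo a).1.ne' (sigmoid_mem_Ioo a).2.ne,
    log_sigmoid, log_one_sub_sigmoid]
  ring

theorem sigmoid_mul_add_Hb_sub (a x : ℝ) :
    (sigmoid a * a + Hb (sigmoid a)) - (x * a + Hb x) = bernoulliKL x (sigmoid a) := by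
  rw [mul_add_Hb_eq_log_sub_bernoulliKL, mul_add_Hb_eq_log_sub_bernoulliKL,
    bernoulliKL_self]
  ring

section Objective

variable {E : Type*} [NormedAddCommGroup E] [InnerProductSpace ℝ E]
  {ι : Type*} [DecidableEq ι] {K : ℕ} {S Q : Finset ι} {v : ι → E} {lamxi lamz c : ℝ}
  {z : ι → Fin K → ℝ} {μ : Fin K → E} {ξ ξ' ξstar : ι → ℝ}

theorem osloL_sub_osloL (hS : ∀ i ∈ S \ Q, ξ i = ξ' i) :
    osloL S Q v lamxi lamz c ξ' z μ - osloL S Q v lamxi lamz c ξ z μ =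
      ∑ i ∈ Q, ((ξ' i * ∑ k, z i k * logp c (v i) k μ + lamxi * Hb (ξ' i)) -
        (ξ i * ∑ k, z i k * logp c (v i) k μ + lamxi * Hb (ξ i))) := by
  have support_eq : ∑ i ∈ S \ Q, ξ i * ∑ k, z i k * logp c (v i) k μ =
      ∑ i ∈ S \ Q, ξ' i * ∑ k, z i k * logp c (v i) k μ :=
    Finset.sum_congr rfl fun i hi => by rw [hS i hi]
  simp only [osloL, ← Finset.sdiff_union_self_eq_union (s := S) (t := Q),
    Finset.sum_union Finset.sdiff_disjoint, support_eq, Finset.sum_add_distrib,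
    Finset.sum_sub_distrib]
  ring

theorem osloL_sub_osloL_eq_sum_bernoulliKL (hlxi : lamxi ≠ 0)
    (hS : ∀ i ∈ S \ Q, ξ i = ξstar i)
    (hQ : ∀ i ∈ Q, ξstar i = sigmoid ((1 / lamxi) * ∑ k, z i k * logp c (v i) k μ)) :
    osloL S Q v lamxi lamz c ξstar z μ - osloL S Q v lamxi lamz c ξ z μ =
      lamxi * ∑ i ∈ Q, bernoulliKL (ξ i) (ξstar i) := by
  rw [osloL_sub_osloL hS, Finset.mul_sum]
  refine Finset.sum_congr rfl fun i hi => ?_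
  rw [hQ i hi, ← sigmoid_mul_add_Hb_sub]
  field_simp

theorem oslo_xi_block_general (hlxi : 0 < lamxi)
    (hS : ∀ i ∈ S \ Q, ξ i = ξstar i)
    (hξstarQ : ∀ i ∈ Q, ξstar i = sigmoid ((1 / lamxi) * ∑ k, z i k * logp c (v i) k μ))
    (hξQ : ∀ i ∈ Q, ξ i ∈ Set.Icc 0 1) (hne : ∃ i ∈ Q, ξ i ≠ ξstar i) :
    osloL S Q v lamxi lamz c ξ z μ < osloL S Q v lamxi lamz c ξstar z μ := by
  have hmem : ∀ i ∈ Q, ξstar i ∈ Set.Ioo 0 1 := fun i hi =>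
    hξstarQ i hi ▸ sigmoid_mem_Ioo _
  obtain ⟨j, hj, hjne⟩ := hne
  rw [← sub_pos, osloL_sub_osloL_eq_sum_bernoulliKL hlxi.ne' hS hξstarQ]
  refine mul_pos hlxi (Finset.sum_pos' (fun i hi => ?_) ⟨j, hj, ?_⟩)
  · exact bernoulliKL_nonneg (hξQ i hi) (Set.Ioo_subset_Icc_self (hmem i hi))
  · exact bernoulliKL_pos (hξQ j hj) (hmem j hj) hjne

end Objective

/-- ξ-block of OSLO's Proposition 1: with `z` and `μ` fixed, the OSLO objective as a
function of feasible `ξ` (equal to 1 on the support, in `(0,1)` on the query set) attains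
its unique global maximum at `ξ*_i = σ((1/λ_ξ)·Σ_k z_{ik}·log p(v_i, k; μ))` for `i ∈ Q`. -/
theorem oslo_xi_block
    {E : Type*} [NormedAddCommGroup E] [InnerProductSpace ℝ E]
    {ι : Type*} [DecidableEq ι] {K : ℕ} (hK : 1 ≤ K)
    (S Q : Finset ι) (hSQ : Disjoint S Q)
    (v : ι → E) (y : ι → Fin K → ℝ) (hy : ∀ i ∈ S, ∃ k, y i = Pi.single k 1)
    (lamxi lamz c : ℝ) (hlxi : 0 < lamxi) (hlz : 0 < lamz)
    (z : ι → Fin K → ℝ) (hz : ∀ i ∈ S ∪ Q, z i ∈ stdSimplex ℝ (Fin K))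
    (hzS : ∀ i ∈ S, z i = y i)
    (μ : Fin K → E)
    (ξstar : ι → ℝ) (hξstarS : ∀ i ∈ S, ξstar i = 1)
    (hξstarQ : ∀ i ∈ Q,
      ξstar i = sigmoid ((1 / lamxi) * ∑ k, z i k * logp c (v i) k μ)) :
    ∀ ξ : ι → ℝ, (∀ i ∈ S, ξ i = 1) → (∀ i ∈ Q, ξ i ∈ Set.Ioo (0 : ℝ) 1) →
      (∃ i ∈ Q, ξ i ≠ ξstar i) →
      osloL S Q v lamxi lamz c ξ z μ < osloL S Q v lamxi lamz c ξstar z μ := by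
  intro ξ hS hQ hne
  exact oslo_xi_block_general hlxi
    (fun i hi => have hiS := (Finset.mem_sdiff.mp hi).1; (hS i hiS).trans (hξstarS i hiS).symm)
    hξstarQ (fun i hi => Set.Ioo_subset_Icc_self (hQ i hi)) hne
end

section
/- In the OSLO setup, fix ξ with ξ_i = 1 for i ∈ S and ξ_i ∈ [0,1] for i ∈ Q, and fix μ ∈ E^K. Consider L(ξ, z, μ) as a function of z over the set of z with z_i = y_i for i ∈ S and z_i ∈ Δ^K for i ∈ Q. Then this function attains its unique global maximum at z* given, for each i ∈ Q and each k, by z*_{ik} = exp((ξ_i/λ_z)·log p(v_i, k; μ)) / Σ_{j=1}^K exp((ξ_i/λ_z)·log p(v_i, j; μ)); that is, L(ξ, z, μ) < L(ξ, z*, μ) for every such feasible z ≠ z*. (z-block of Proposition 1 for the full OSLO objective.) -/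
open scoped BigOperators

/-!
For fixed `ξ` and `μ` the objective decouples over the query samples. Sample `i` contributes `λ_z`
times `∑ k, z_k * a_k + H(z)` with scores `a_k = (ξ_i / λ_z) * log p(v_i, k; μ)`. Since
`a = log (softmax a) + logSumExp a`, on the simplex this quantity is `logSumExp a` minus the
Kullback-Leibler divergence of `z` from `softmax a`, so Gibbs' inequality identifies `softmax a` as
the only maximizer.
-/

section Gibbs

open Real

theorem mul_log_sub_log_lt_sub {p w : ℝ} (hp : 0 ≤ p) (hw : 0 < w) (hne : p ≠ w) :
    p * (log w - log p) < w - p := by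
  rcases hp.eq_or_lt with rfl | hp
  · simpa using hw
  have hratio : negMulLog (p / w) < 1 - p / w :=
    negMulLog_lt_one_sub_self (by positivity) (by rwa [ne_eq, div_eq_one_iff_eq hw.ne'])
  calc p * (log w - log p) = w * negMulLog (p / w) := by
        rw [negMulLog, log_div hp.ne' hw.ne']
        field_simp
        ring
    _ < w * (1 - p / w) := by gcongr
    _ = w - p := by field_simp

theorem sum_mul_log_lt_sum_mul_log {κ : Type*} {s : Finset κ} {p w : κ → ℝ}
    (hp : ∀ k ∈ s, 0 ≤ p k) (hw : ∀ k ∈ s, 0 < w k) (hsum : ∑ k ∈ s, w k ≤ ∑ k ∈ s, p k)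
    (hne : ∃ k ∈ s, p k ≠ w k) :
    ∑ k ∈ s, p k * log (w k) < ∑ k ∈ s, p k * log (p k) := by
  obtain ⟨k₀, hk₀, hne⟩ := hne
  have hlt : ∑ k ∈ s, p k * (log (w k) - log (p k)) < ∑ k ∈ s, (w k - p k) := by
    refine Finset.sum_lt_sum (fun k hk ↦ ?_)
      ⟨k₀, hk₀, mul_log_sub_log_lt_sub (hp k₀ hk₀) (hw k₀ hk₀) hne⟩
    rcases eq_or_ne (p k) (w k) with heq | hne
    · simp [heq]
    · exact (mul_log_sub_log_lt_sub (hp k hk) (hw k hk) hne).le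
  simp only [mul_sub, Finset.sum_sub_distrib] at hlt
  linarith

end Gibbs

section Softmax

open Real

variable {κ : Type*} [Fintype κ]

/-- The logarithm of the partition function of the scores `a`, which is the maximum over the
simplex of expected score plus entropy. Its value is `0` if there are no scores. -/
noncomputable def logSumExp (a : κ → ℝ) : ℝ := log (∑ k, exp (a k))

/-- The softmax (Gibbs) distribution of the scores `a`, which is the maximizer over the simplex of
expected score plus entropy. -/
noncomputable def softmax (a : κ → ℝ) (k : κ) : ℝ := exp (a k) / ∑ j, exp (a j)

theorem softmax_pos (a : κ → ℝ) (k : κ) : 0 < softmax a k :=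
  div_pos (exp_pos _) (Finset.sum_pos (fun _ _ ↦ exp_pos _) ⟨k, Finset.mem_univ k⟩)

theorem sum_softmax [Nonempty κ] (a : κ → ℝ) : ∑ k, softmax a k = 1 := by
  have hZ : 0 < ∑ k, exp (a k) := Finset.sum_pos (fun _ _ ↦ exp_pos _) Finset.univ_nonempty
  simp only [softmax, ← Finset.sum_div, div_self hZ.ne']

theorem log_softmax (a : κ → ℝ) (k : κ) : log (softmax a k) = a k - logSumExp a := by
  have hZ : 0 < ∑ j, exp (a j) := Finset.sum_pos (fun _ _ ↦ exp_pos _) ⟨k, Finset.mem_univ k⟩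
  rw [softmax, log_div (exp_ne_zero _) hZ.ne', log_exp, logSumExp]

theorem sum_mul_add_negMulLog_eq {p : κ → ℝ} (hp : ∑ k, p k = 1) (a : κ → ℝ) :
    ∑ k, (p k * a k + negMulLog (p k)) =
      logSumExp a + (∑ k, p k * log (softmax a k) - ∑ k, p k * log (p k)) := by
  simp only [log_softmax, mul_sub, Finset.sum_sub_distrib, Finset.sum_add_distrib, negMulLog,
    neg_mul, Finset.sum_neg_distrib, ← Finset.sum_mul, hp]
  ring

theorem sum_mul_add_negMulLog_lt_softmax {a p : κ → ℝ} (hp : p ∈ stdSimplex ℝ κ)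
    (hne : p ≠ softmax a) :
    ∑ k, (p k * a k + negMulLog (p k)) <
      ∑ k, (softmax a k * a k + negMulLog (softmax a k)) := by
  obtain ⟨k, hk⟩ := Function.ne_iff.mp hne
  have : Nonempty κ := ⟨k⟩
  have hgibbs : ∑ k, p k * log (softmax a k) < ∑ k, p k * log (p k) :=
    sum_mul_log_lt_sum_mul_log (fun k _ ↦ hp.1 k) (fun k _ ↦ softmax_pos a k)
      (by rw [sum_softmax, hp.2]) ⟨k, Finset.mem_univ k, hk⟩
  rw [sum_mul_add_negMulLog_eq hp.2, sum_mul_add_negMulLog_eq (sum_softmax a)]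
  linarith

theorem mul_sum_add_mul_sum_negMulLog_lt_softmax {lam : ℝ} (hlam : 0 < lam) (x : ℝ)
    (ℓ : κ → ℝ) {p : κ → ℝ} (hp : p ∈ stdSimplex ℝ κ)
    (hne : p ≠ softmax fun k ↦ x / lam * ℓ k) :
    x * ∑ k, p k * ℓ k + lam * ∑ k, negMulLog (p k) <
      x * ∑ k, softmax (fun k ↦ x / lam * ℓ k) k * ℓ k +
        lam * ∑ k, negMulLog (softmax (fun k ↦ x / lam * ℓ k) k) := by
  have hscale (q : κ → ℝ) : x * ∑ k, q k * ℓ k + lam * ∑ k, negMulLog (q k) =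
      lam * ∑ k, (q k * (x / lam * ℓ k) + negMulLog (q k)) := by
    simp only [Finset.mul_sum, ← Finset.sum_add_distrib]
    refine Finset.sum_congr rfl fun k _ ↦ ?_
    field_simp
  rw [hscale, hscale]
  exact mul_lt_mul_of_pos_left (sum_mul_add_negMulLog_lt_softmax hp hne) hlam

end Softmax

section SoftAssignment

open Real

variable {ι κ : Type*} [DecidableEq ι] [Fintype κ]

/-- The OSLO objective as a function of the assignments `z`, for an arbitrary log-likelihood `ℓ i k`
of sample `i` in class `k` instead of the Gaussian one, and with the part of the penalty of
sample `i` that does not involve `z` written as an arbitrary constant `b i`. -/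
noncomputable def softAssignmentObjective (S Q : Finset ι) (ℓ : ι → κ → ℝ) (lam : ℝ)
    (ξ b : ι → ℝ) (z : ι → κ → ℝ) : ℝ :=
  (∑ i ∈ S ∪ Q, ξ i * ∑ k, z i k * ℓ i k) + ∑ i ∈ Q, (lam * ∑ k, negMulLog (z i k) + b i)

theorem softAssignmentObjective_eq_sum_sdiff_add_sum (S Q : Finset ι) (ℓ : ι → κ → ℝ) (lam : ℝ)
    (ξ b : ι → ℝ) (z : ι → κ → ℝ) :
    softAssignmentObjective S Q ℓ lam ξ b z =
      ∑ i ∈ S \ Q, ξ i * ∑ k, z i k * ℓ i k +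
        ∑ i ∈ Q, (ξ i * ∑ k, z i k * ℓ i k + lam * ∑ k, negMulLog (z i k) + b i) := by
  rw [softAssignmentObjective, ← Finset.sdiff_union_self_eq_union,
    Finset.sum_union Finset.sdiff_disjoint, add_assoc, ← Finset.sum_add_distrib]
  simp only [add_assoc]

theorem osloL_eq_softAssignmentObjective {E : Type*} [NormedAddCommGroup E]
    [InnerProductSpace ℝ E] {K : ℕ} (S Q : Finset ι) (v : ι → E) (lamxi lamz c : ℝ) (ξ : ι → ℝ)
    (z : ι → Fin K → ℝ) (μ : Fin K → E) :
    osloL S Q v lamxi lamz c ξ z μ =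
      softAssignmentObjective S Q (fun i k ↦ logp c (v i) k μ) lamz ξ
        (fun i ↦ lamxi * Hb (ξ i)) z := by
  simp only [osloL, softAssignmentObjective, shannonH, negMulLog, neg_mul, Finset.sum_neg_distrib]

theorem oslo_z_block_general {S Q : Finset ι} {ℓ : ι → κ → ℝ} {lam : ℝ} (hlam : 0 < lam)
    (ξ b : ι → ℝ) {z zstar : ι → κ → ℝ} (hS : ∀ i ∈ S, z i = zstar i)
    (hzstar : ∀ i ∈ Q, zstar i = softmax fun k ↦ ξ i / lam * ℓ i k)
    (hz : ∀ i ∈ Q, z i ∈ stdSimplex ℝ κ) (hne : ∃ i ∈ Q, z i ≠ zstar i) :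
    softAssignmentObjective S Q ℓ lam ξ b z < softAssignmentObjective S Q ℓ lam ξ b zstar := by
  obtain ⟨i₀, hi₀, hne⟩ := hne
  have hsupport : ∑ i ∈ S \ Q, ξ i * ∑ k, z i k * ℓ i k =
      ∑ i ∈ S \ Q, ξ i * ∑ k, zstar i k * ℓ i k :=
    Finset.sum_congr rfl fun i hi ↦ by rw [hS i (Finset.sdiff_subset hi)]
  have hquery (i : ι) (hi : i ∈ Q) (hne : z i ≠ zstar i) :
      ξ i * ∑ k, z i k * ℓ i k + lam * ∑ k, negMulLog (z i k) + b i <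
        ξ i * ∑ k, zstar i k * ℓ i k + lam * ∑ k, negMulLog (zstar i k) + b i := by
    rw [hzstar i hi] at hne ⊢
    gcongr ?_ + _
    exact mul_sum_add_mul_sum_negMulLog_lt_softmax hlam (ξ i) (ℓ i) (hz i hi) hne
  simp only [softAssignmentObjective_eq_sum_sdiff_add_sum, hsupport]
  gcongr _ + ?_
  refine Finset.sum_lt_sum (fun i hi ↦ ?_) ⟨i₀, hi₀, hquery i₀ hi₀ hne⟩
  rcases eq_or_ne (z i) (zstar i) with heq | hne
  · rw [heq]
  · exact (hquery i hi hne).le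

end SoftAssignment

/-- z-block of OSLO's Proposition 1: with `ξ` and `μ` fixed, the OSLO objective as a
function of feasible `z` (equal to `y` on the support, in `Δ^K` on the query set) attains
its unique global maximum at the softmax point
`z*_{ik} = exp((ξ_i/λ_z)·log p(v_i, k; μ)) / Σ_j exp((ξ_i/λ_z)·log p(v_i, j; μ))`. -/
theorem oslo_z_block
    {E : Type*} [NormedAddCommGroup E] [InnerProductSpace ℝ E]
    {ι : Type*} [DecidableEq ι] {K : ℕ} (hK : 1 ≤ K)
    (S Q : Finset ι) (hSQ : Disjoint S Q)
    (v : ι → E) (y : ι → Fin K → ℝ) (hy : ∀ i ∈ S, ∃ k, y i = Pi.single k 1)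
    (lamxi lamz c : ℝ) (hlxi : 0 < lamxi) (hlz : 0 < lamz)
    (ξ : ι → ℝ) (hξS : ∀ i ∈ S, ξ i = 1) (hξQ : ∀ i ∈ Q, ξ i ∈ Set.Icc (0 : ℝ) 1)
    (μ : Fin K → E)
    (zstar : ι → Fin K → ℝ) (hzstarS : ∀ i ∈ S, zstar i = y i)
    (hzstarQ : ∀ i ∈ Q, ∀ k,
      zstar i k = Real.exp ((ξ i / lamz) * logp c (v i) k μ) /
        ∑ j, Real.exp ((ξ i / lamz) * logp c (v i) j μ)) :
    ∀ z : ι → Fin K → ℝ, (∀ i ∈ S, z i = y i) →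
      (∀ i ∈ Q, z i ∈ stdSimplex ℝ (Fin K)) →
      (∃ i ∈ Q, z i ≠ zstar i) →
      osloL S Q v lamxi lamz c ξ z μ < osloL S Q v lamxi lamz c ξ zstar μ := by
  intro z hzS hzQ hne
  simpa only [osloL_eq_softAssignmentObjective] using
    oslo_z_block_general hlz ξ _ (fun i hi ↦ (hzS i hi).trans (hzstarS i hi).symm)
      (fun i hi ↦ funext (hzstarQ i hi)) hzQ hne
end

section
/- Let E be a real inner product space, C a nonempty finite index set of classes, and (D_k)_{k∈C} pairwise disjoint nonempty finite sets of points of E with D = ∪_{k∈C} D_k, and assume D \ D_k is nonempty for every k. For each k let μ_k = (1/|D_k|)·Σ_{z′∈D_k} z′ be the centroid of class k, and assume there are no ties: for every k, every z ∈ D \ D_k and every z′ ∈ D_k, ‖z′ − μ_k‖ ≠ ‖z − μ_k‖. Define the Imposture Factor IF_{z|k} = (1/|D_k|)·|{z′ ∈ D_k : ‖z′ − μ_k‖ > ‖z − μ_k‖}|, the Mean Imposture Factor MIF = (1/|C|)·Σ_{k∈C} (1/|D \ D_k|)·Σ_{z∈D\D_k} IF_{z|k}, and for each k the AUROC of the detector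 scoring each point by its distance to μ_k, AUROC_k = (1/(|D_k|·|D \ D_k|))·|{(z′, z) ∈ D_k × (D \ D_k) : ‖z − μ_k‖ > ‖z′ − μ_k‖}|. Then MIF = 1 − (1/|C|)·Σ_{k∈C} AUROC_k. -/
open scoped BigOperators

/-! For a fixed class, the sum of the Imposture Factors over the outliers counts the
inlier–outlier pairs in which the inlier scores higher, while the AUROC counts those in which the
outlier scores higher. Without ties these two sets of pairs partition the set of all pairs, so the
two fractions add up to `1` for each class, and averaging over the classes gives the identity. -/

section Score

open Finset

variable {X α : Type*} [LinearOrder α]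

/-- The Imposture Factor of the point `z` with respect to the class `I`: the fraction of members
of `I` that are scored strictly higher than `z`, a high score meaning atypical of the class. -/
noncomputable def impostureFactor (s : X → α) (I : Finset X) (z : X) : ℝ :=
  (#I : ℝ)⁻¹ * #{x ∈ I | s z < s x}

/-- The Mean Imposture Factor of a family of classes: the Imposture Factor with respect to the
class `I k`, scored by `s k`, averaged over the outliers `O k` and then over `k`, so that every
class has the same weight whatever its size. -/
noncomputable def meanImpostureFactor {C : Type*} [Fintype C] (s : C → X → α)
    (I O : C → Finset X) : ℝ :=
  (Fintype.card C : ℝ)⁻¹ * ∑ k, (#(O k) : ℝ)⁻¹ * ∑ z ∈ O k, impostureFactor (s k) (I k) z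

/-- The AUROC of the score `s` on the inliers `I` and the outliers `O`, as the fraction of
inlier–outlier pairs in which the outlier is scored strictly higher; a tie counts as `0`, not as
`1 / 2`. -/
noncomputable def auroc (s : X → α) (I O : Finset X) : ℝ :=
  ((#I : ℝ) * #O)⁻¹ * #{p ∈ I ×ˢ O | s p.1 < s p.2}

theorem sum_card_filter_eq_card_filter_product {ι κ : Type*} (A : Finset ι) (B : Finset κ)
    (r : ι → κ → Prop) [∀ x y, Decidable (r x y)] :
    ∑ y ∈ B, #{x ∈ A | r x y} = #{p ∈ A ×ˢ B | r p.1 p.2} := by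
  simp only [card_filter, sum_product_right]

theorem card_filter_product_gt_add_card_filter_product_lt {s : X → α} {I O : Finset X}
    (hties : ∀ z ∈ O, ∀ x ∈ I, s x ≠ s z) :
    #{p ∈ I ×ˢ O | s p.2 < s p.1} + #{p ∈ I ×ˢ O | s p.1 < s p.2} = #I * #O := by
  have not_lt_iff : ∀ p ∈ I ×ˢ O, (¬ s p.2 < s p.1 ↔ s p.1 < s p.2) := fun p hp =>
    not_lt.trans (hties p.2 (mem_product.1 hp).2 p.1 (mem_product.1 hp).1).le_iff_lt
  rw [← filter_congr not_lt_iff, card_filter_add_card_filter_not, card_product]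

theorem sum_impostureFactor (s : X → α) (I O : Finset X) :
    ∑ z ∈ O, impostureFactor s I z = (#I : ℝ)⁻¹ * #{p ∈ I ×ˢ O | s p.2 < s p.1} := by
  simp only [impostureFactor]
  rw [← mul_sum, ← sum_card_filter_eq_card_filter_product I O fun x z => s z < s x, Nat.cast_sum]

theorem mean_impostureFactor_eq_one_sub_auroc {s : X → α} {I O : Finset X}
    (hI : I.Nonempty) (hO : O.Nonempty) (hties : ∀ z ∈ O, ∀ x ∈ I, s x ≠ s z) :
    (#O : ℝ)⁻¹ * ∑ z ∈ O, impostureFactor s I z = 1 - auroc s I O := by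
  have hI₀ : (#I : ℝ) ≠ 0 := Nat.cast_ne_zero.2 hI.card_ne_zero
  have hO₀ : (#O : ℝ) ≠ 0 := Nat.cast_ne_zero.2 hO.card_ne_zero
  have pairs : (#{p ∈ I ×ˢ O | s p.2 < s p.1} : ℝ) + #{p ∈ I ×ˢ O | s p.1 < s p.2} = #I * #O :=
    mod_cast card_filter_product_gt_add_card_filter_product_lt hties
  rw [sum_impostureFactor, auroc, eq_sub_of_add_eq pairs]
  field_simp

theorem mif_eq_one_sub_mean_auroc_general {C : Type*} [Fintype C] [Nonempty C]
    (s : C → X → α) (I O : C → Finset X)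
    (hI : ∀ k, (I k).Nonempty) (hO : ∀ k, (O k).Nonempty)
    (hties : ∀ k, ∀ z ∈ O k, ∀ x ∈ I k, s k x ≠ s k z) :
    meanImpostureFactor s I O =
      1 - (Fintype.card C : ℝ)⁻¹ * ∑ k, auroc (s k) (I k) (O k) := by
  have hC : (Fintype.card C : ℝ) ≠ 0 := Nat.cast_ne_zero.2 Fintype.card_ne_zero
  calc
    meanImpostureFactor s I O
        = (Fintype.card C : ℝ)⁻¹ * ∑ k, (1 - auroc (s k) (I k) (O k)) := by
      simp only [meanImpostureFactor,
        fun k => mean_impostureFactor_eq_one_sub_auroc (hI k) (hO k) (hties k)]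
    _ = 1 - (Fintype.card C : ℝ)⁻¹ * ∑ k, auroc (s k) (I k) (O k) := by
      simp [mul_sub, hC]

end Score

/-- The Mean Imposture Factor equals one minus the mean per-class AUROC of the
distance-to-centroid detector, in the absence of ties. Here `D k` are the pairwise
disjoint nonempty classes, `Dall` their union, `μ k` the class centroids,
`IF z k` the Imposture Factor of `z` w.r.t. class `k`, `MIF` the Mean Imposture Factor,
and `AUROC k` the fraction of inlier–outlier pairs in which the outlier receives the
strictly larger distance to the centroid of class `k`. -/
theorem mif_eq_one_sub_mean_auroc
    {E : Type*} [NormedAddCommGroup E] [InnerProductSpace ℝ E] [DecidableEq E]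
    {C : Type*} [Fintype C] [Nonempty C]
    (D : C → Finset E)
    (hdisj : ∀ k l, k ≠ l → Disjoint (D k) (D l))
    (hne : ∀ k, (D k).Nonempty)
    (Dall : Finset E) (hDall : Dall = Finset.univ.biUnion D)
    (hout : ∀ k, (Dall \ D k).Nonempty)
    (μ : C → E) (hμ : ∀ k, μ k = ((D k).card : ℝ)⁻¹ • ∑ x ∈ D k, x)
    (hties : ∀ k, ∀ z ∈ Dall \ D k, ∀ z' ∈ D k, ‖z' - μ k‖ ≠ ‖z - μ k‖)
    (IF : E → C → ℝ)
    (hIF : ∀ z k, IF z k = ((D k).card : ℝ)⁻¹ *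
      (((D k).filter (fun z' => ‖z - μ k‖ < ‖z' - μ k‖)).card : ℝ))
    (MIF : ℝ)
    (hMIF : MIF = (Fintype.card C : ℝ)⁻¹ *
      ∑ k, ((Dall \ D k).card : ℝ)⁻¹ * ∑ z ∈ Dall \ D k, IF z k)
    (AUROC : C → ℝ)
    (hAUROC : ∀ k, AUROC k = (((D k).card : ℝ) * ((Dall \ D k).card : ℝ))⁻¹ *
      ((((D k) ×ˢ (Dall \ D k)).filter
        (fun p => ‖p.1 - μ k‖ < ‖p.2 - μ k‖)).card : ℝ)) :
    MIF = 1 - (Fintype.card C : ℝ)⁻¹ * ∑ k, AUROC k := by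
  simpa only [hMIF, hIF, hAUROC, meanImpostureFactor, impostureFactor, auroc] using
    mif_eq_one_sub_mean_auroc_general (fun k z => ‖z - μ k‖) D (fun k => Dall \ D k) hne hout hties
end
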